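/- Let A be a core synchronous transducer on X_n, synchronizing at level k, invertible, with every state a homeomorphism state, and suppose the inverse transducer A^{−1} is not synchronizing at any level. Then there exist states p, q ∈ Q_A such that the assignment w ↦ A_w, from nonempty words w over {p, q} to self-maps of X_n^ℕ, is injective; in particular the automaton semigroup generated by A contains a free subsemigroup of rank 2. -/

import Mathlib

/-!
Write `B` for the inverse transducer. Since `Q` is finite and `B` synchronizes at no level, one
fixed pair of states `p, q` is separated by words of every length: for all `l` there is `Γ` of
length `l` with `B.stepW Γ p ≠ B.stepW Γ q` (`exists_persistent_pair`).

Let `w = u p` and `w' = u' q` be words of equal length `m`, and suppose they act equally. Choose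
such a `Γ` of length `m k` and let `Δ` be its common preimage under `w` and `w'`. The power `A^m`
is synchronizing at level `m k` (`iterOuts_eq`), so reading `Δ` from `w` and from `w'` leads to the
same `m`-tuple of states. However, the last coordinates of these tuples are `B.stepW Γ p` and
`B.stepW Γ q`, which differ. As all states act injectively, common last letters cancel, so distinct
words of equal length over `{p, q}` act differently (`eq_of_iterW_eq`).

For arbitrary `w, w'` acting equally, `w p w'` and `w' p w` act equally and have equal length, hence
coincide, and likewise for `q`. If `w` were shorter than `w'`, the letter of `w'` at position
`|w|` would be both `p` and `q`. So `w` and `w'` have equal length, and the previous case applies.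
-/

/-- A synchronous transducer with alphabet `X` and state set `Q`:
`step x q` is the state reached after reading letter `x` at state `q`, and
`out x q` is the letter written. -/
structure Transducer (X : Type*) (Q : Type*) where
  step : X → Q → Q
  out : X → Q → X

namespace Transducer

variable {X Q R : Type*}

/-- The transition function extended to words (read left to right). -/
def stepW (T : Transducer X Q) : List X → Q → Q
  | [], q => q
  | x :: w, q => T.stepW w (T.step x q)

/-- The output function extended to words. -/
def outW (T : Transducer X Q) : List X → Q → List X
  | [], _ => []
  | x :: w, q => T.out x q :: T.outW w (T.step x q)

theorem stepW_append (T : Transducer X Q) (u v : List X) (q : Q) :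
    T.stepW (u ++ v) q = T.stepW v (T.stepW u q) := by
  induction u generalizing q with
  | nil => rfl
  | cons x u ih => simpa [stepW] using ih (T.step x q)

/-- `T` is synchronizing at level `k`: the state reached after reading any word of
length `k` is independent of the starting state. -/
def Synchronizing (T : Transducer X Q) (k : ℕ) : Prop :=
  ∀ Γ : List X, Γ.length = k → ∀ p q : Q, T.stepW Γ p = T.stepW Γ q

/-- A state is in the core of `T` if it is forced by some nonempty word. -/
def InCore (T : Transducer X Q) (q : Q) : Prop :=
  ∃ Γ : List X, Γ ≠ [] ∧ ∀ p : Q, T.stepW Γ p = q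

/-- `T` is core if every state is forced. -/
def IsCore (T : Transducer X Q) : Prop := ∀ q : Q, T.InCore q

/-- The map on one-sided infinite sequences induced by the state `q`. -/
def stateMap (T : Transducer X Q) (q : Q) (x : ℕ → X) : ℕ → X :=
  fun i => T.out (x i) (T.stepW ((List.range i).map x) q)

/-- Every state of `T` is a homeomorphism state. -/
def AllHomeo (T : Transducer X Q) : Prop := ∀ q : Q, Function.Bijective (T.stateMap q)

/-- `T` is invertible: every state acts as a bijection on single letters. -/
def Invertible (T : Transducer X Q) : Prop :=
  ∀ q : Q, Function.Bijective fun x => T.out x q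

/-- The map `f_T` on bi-infinite sequences induced by a transducer synchronizing at
level `k`; the letter at position `i` of the image is obtained by processing `x i`
from the state reached after reading `x (i-k), …, x (i-1)` starting at the basepoint
state `q0` (when `T` is synchronizing at level `k` this is the forced state, and the
map does not depend on the choice of `q0`). -/
def zmap (T : Transducer X Q) (k : ℕ) (q0 : Q) (x : ℤ → X) : ℤ → X :=
  fun i => T.out (x i) (T.stepW ((List.range k).map fun j => x (i - (k : ℤ) + (j : ℤ))) q0)

/-- The composite map on one-sided sequences represented by a word of states,
applied leftmost letter first. -/
def wordMap (T : Transducer X Q) : List Q → (ℕ → X) → ℕ → X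
  | [], x => x
  | q :: w, x => T.wordMap w (T.stateMap q x)

/-- A bi-infinite sequence is rational if it is eventually periodic in both directions. -/
def IsRational (z : ℤ → X) : Prop :=
  ∃ (N p q : ℕ), 0 < p ∧ 0 < q ∧
    (∀ i : ℤ, (N : ℤ) ≤ i → z (i + (p : ℤ)) = z i) ∧
    (∀ i : ℤ, i ≤ -(N : ℤ) → z (i - (q : ℤ)) = z i)

/-- The inverse transducer of an invertible transducer. -/
noncomputable def invT (T : Transducer X Q) (hX : Nonempty X) : Transducer X Q where
  step := fun y q => T.step (@Function.invFun X X hX (fun x => T.out x q) y) q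
  out := fun y q => @Function.invFun X X hX (fun x => T.out x q) y

/-- The product transducer `A*B`. -/
def prodT (T : Transducer X Q) (S : Transducer X R) : Transducer X (Q × R) where
  step := fun x pq => (T.step x pq.1, S.step (T.out x pq.1) pq.2)
  out := fun x pq => S.out (T.out x pq.1) pq.2

/-- The `m`-fold power `A^m`, with state set `Q^m`. -/
def powT (T : Transducer X Q) : (m : ℕ) → Transducer X (Fin m → Q)
  | 0 => { step := fun _ u => u, out := fun x _ => x }
  | m + 1 =>
    { step := fun x u =>
        Fin.cons (T.step x (u 0)) ((T.powT m).step (T.out x (u 0)) fun i => u i.succ)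
      out := fun x u => (T.powT m).out (T.out x (u 0)) fun i => u i.succ }

/-- The restriction of a transducer to its core. -/
def coreT (T : Transducer X Q) : Transducer X {q : Q // T.InCore q} where
  step := fun x q =>
    ⟨T.step x q.1, by
      obtain ⟨Γ, hΓ, h⟩ := q.2
      exact ⟨Γ ++ [x], by simp, fun p => by rw [T.stepW_append, h p]; rfl⟩⟩
  out := fun x q => T.out x q.1

/-- `Γ_l^P`: the word obtained by passing `Γ` successively through the states in `P`. -/
def iterW (T : Transducer X Q) : List Q → List X → List X
  | [], Γ => Γ
  | p :: P, Γ => T.iterW P (T.outW Γ p)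

/-- The list of states `out_i^P` reached when passing `Γ` successively through `P`. -/
def iterOuts (T : Transducer X Q) : List Q → List X → List Q
  | [], _ => []
  | p :: P, Γ => T.stepW Γ p :: T.iterOuts P (T.outW Γ p)

/-- `((t :: Tt), (p :: Tp), Γ)` is a split (forced states computed from the
basepoint state `q0`). -/
def SplitCond (T : Transducer X Q) (q0 : Q) (t p : Q) (Tt Tp : List Q) (Γ : List X) : Prop :=
  Tt.length = Tp.length ∧
  T.iterOuts (t :: Tt) Γ = T.iterOuts (p :: Tp) Γ ∧
  (∀ i : ℕ, 1 ≤ i → i < (t :: Tt).length →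
    T.stepW (T.iterW ((t :: Tt).take i) Γ) q0 = T.stepW (T.iterW ((p :: Tp).take i) Γ) q0) ∧
  T.stepW (T.iterW (t :: Tt) Γ) q0 ≠ T.stepW (T.iterW (p :: Tp) Γ) q0

/-- The bottom of the split `((t :: Tt), (p :: Tp), Γ)` depends only on its top. -/
def DependsOnTop (T : Transducer X Q) (q0 : Q) (t p : Q) (Tt Tp : List Q) (Γ : List X) : Prop :=
  ∀ U U' : List Q, U.length = Tt.length → U'.length = Tp.length →
    T.iterOuts (t :: U) Γ = T.iterOuts (t :: Tt) Γ ∧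
    T.iterOuts (p :: U') Γ = T.iterOuts (p :: Tp) Γ ∧
    T.stepW (T.iterW (t :: U) Γ) q0 = T.stepW (T.iterW (t :: Tt) Γ) q0 ∧
    T.stepW (T.iterW (p :: U') Γ) q0 = T.stepW (T.iterW (p :: Tp) Γ) q0

/-- The edge relation of the graph of bad pairs `G_r(T)` (on unordered pairs of
states, modelled as subsets of `Q`). -/
def BadEdge (T : Transducer X Q) (q0 : Q) (r : ℕ) (v w : Set Q) : Prop :=
  ∃ (t p : Q) (Tt Tp : List Q) (Γ : List X), Γ.length = r ∧
    T.SplitCond q0 t p Tt Tp Γ ∧ T.DependsOnTop q0 t p Tt Tp Γ ∧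
    v = {t, p} ∧
    w = {T.stepW (T.iterW (t :: Tt) Γ) q0, T.stepW (T.iterW (p :: Tp) Γ) q0}

/-- The `r` splitting length of `T`, as an extended natural number (`⊤` if no split
at level `r` exists). -/
noncomputable def splittingLength (T : Transducer X Q) (q0 : Q) (r : ℕ) : ℕ∞ :=
  sInf {L : ℕ∞ | ∃ (t p : Q) (Tt Tp : List Q) (Γ : List X),
    Γ.length = r ∧ L = ((Tt.length + 1 : ℕ) : ℕ∞) ∧ T.SplitCond q0 t p Tt Tp Γ}

/-- The `i`-th rotation of a word. -/
def rotWord (i : ℕ) (Γ : List X) : List X :=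
  Γ.drop (Γ.length - i) ++ Γ.take (Γ.length - i)

/-- A nonempty word is prime if it is not a proper power of a shorter word. -/
def IsPrimeWord (Γ : List X) : Prop :=
  Γ ≠ [] ∧ ∀ (δ : List X) (m : ℕ), 2 ≤ m → Γ ≠ (List.replicate m δ).flatten

/-- The length of the orbit of `Γ` under `f`. -/
noncomputable def orbitLen (f : List X → List X) (Γ : List X) : ℕ :=
  (Set.range fun m : ℕ => f^[m] Γ).ncard

/-- The minimal `s ≥ 1` such that `f^[s] Γ` is a rotation of `Γ`
(for words of length `k`). -/
noncomputable def sigmaIdx (f : List X → List X) (k : ℕ) (Γ : List X) : ℕ :=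
  sInf {s : ℕ | 1 ≤ s ∧ ∃ i < k, f^[s] Γ = rotWord i Γ}

/-- The rotation index attained at the minimal exponent `sigmaIdx`. -/
noncomputable def rhoIdx (f : List X → List X) (k : ℕ) (Γ : List X) : ℕ :=
  sInf {i : ℕ | i < k ∧ f^[sigmaIdx f k Γ] Γ = rotWord i Γ}

end Transducer

namespace Transducer

variable {X Q : Type*}

theorem outW_append (T : Transducer X Q) (u v : List X) (q : Q) :
    T.outW (u ++ v) q = T.outW u q ++ T.outW v (T.stepW u q) := by
  induction u generalizing q with
  | nil => rfl
  | cons x u ih => simp [outW, stepW, ih]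

theorem outW_length (T : Transducer X Q) (u : List X) (q : Q) :
    (T.outW u q).length = u.length := by
  induction u generalizing q with
  | nil => rfl
  | cons x u ih => simp [outW, ih]

theorem iterW_length (T : Transducer X Q) (w : List Q) (u : List X) :
    (T.iterW w u).length = u.length := by
  induction w generalizing u with
  | nil => rfl
  | cons a w ih => simp [iterW, ih, outW_length]

theorem iterW_append (T : Transducer X Q) (w v : List Q) (u : List X) :
    T.iterW (w ++ v) u = T.iterW v (T.iterW w u) := by
  induction w generalizing u with
  | nil => rfl
  | cons a w ih => simp [iterW, ih]

theorem iterOuts_append (T : Transducer X Q) (w v : List Q) (u : List X) :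
    T.iterOuts (w ++ v) u = T.iterOuts w u ++ T.iterOuts v (T.iterW w u) := by
  induction w generalizing u with
  | nil => rfl
  | cons a w ih => simp [iterW, iterOuts, ih]

theorem outW_injective (T : Transducer X Q) (hT : T.Invertible) (q : Q) :
    Function.Injective fun u => T.outW u q := by
  intro u v h
  induction u generalizing v q with
  | nil => cases v with
    | nil => rfl
    | cons y v => simp [outW] at h
  | cons x u ih => cases v with
    | nil => simp [outW] at h
    | cons y v =>
      simp only [outW, List.cons.injEq] at h
      obtain rfl : x = y := (hT q).1 h.1
      rw [ih _ h.2]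

theorem outW_surjective (T : Transducer X Q) (hT : T.Invertible) (q : Q) :
    Function.Surjective fun u => T.outW u q := by
  intro v
  induction v generalizing q with
  | nil => exact ⟨[], rfl⟩
  | cons y v ih =>
    obtain ⟨x, hx⟩ := (hT q).2 y
    obtain ⟨u, hu⟩ := ih (T.step x q)
    exact ⟨x :: u, by simp_all [outW]⟩

theorem iterW_surjective (T : Transducer X Q) (hT : T.Invertible) (w : List Q) :
    Function.Surjective (T.iterW w) := by
  induction w with
  | nil => exact fun u => ⟨u, rfl⟩
  | cons a w ih => exact ih.comp (T.outW_surjective hT a)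

/-- Reading an output of `T` in the inverse transducer retraces the path followed by `T`. -/
theorem invT_stepW_outW (T : Transducer X Q) (hX : Nonempty X) (hT : T.Invertible)
    (u : List X) (q : Q) : (T.invT hX).stepW (T.outW u q) q = T.stepW u q := by
  induction u generalizing q with
  | nil => rfl
  | cons x u ih =>
    have h : (T.invT hX).step (T.out x q) q = T.step x q := by
      simp only [invT]
      congr 1
      exact Function.leftInverse_invFun (hT q).1 x
    simp [outW, stepW, h, ih]

theorem map_stateMap (T : Transducer X Q) (q : Q) (x : ℕ → X) (N : ℕ) :
    (List.range N).map (T.stateMap q x) = T.outW ((List.range N).map x) q := by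
  induction N with
  | zero => rfl
  | succ N ih => simp [List.range_succ, outW_append, ih, outW, stateMap]

theorem map_wordMap (T : Transducer X Q) (w : List Q) (x : ℕ → X) (N : ℕ) :
    (List.range N).map (T.wordMap w x) = T.iterW w ((List.range N).map x) := by
  induction w generalizing x with
  | nil => rfl
  | cons a w ih => simp only [wordMap, iterW, ih, map_stateMap]

theorem iterW_eq_of_wordMap_eq [Nonempty X] (T : Transducer X Q) {w w' : List Q}
    (h : T.wordMap w = T.wordMap w') : T.iterW w = T.iterW w' := by
  funext u
  obtain ⟨d⟩ := ‹Nonempty X›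
  have hu : (List.range u.length).map (fun i => u.getD i d) = u := by
    apply List.ext_getElem
    · simp
    · intro i h1 h2
      simp [h2]
  rw [← hu, ← map_wordMap, ← map_wordMap, h]

/-- The powers of a synchronizing transducer are synchronizing: the states reached after reading a
word from two tuples of length `m` depend only on the last `m * k` letters of that word. The
differing prefixes `α, α'` account for the letters written before synchronization. -/
theorem iterOuts_eq (T : Transducer X Q) {k : ℕ} (hs : T.Synchronizing k)
    (w w' : List Q) (hl : w.length = w'.length) (α α' δ : List X)
    (hδ : w.length * k ≤ δ.length) :
    T.iterOuts w (α ++ δ) = T.iterOuts w' (α' ++ δ) := by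
  induction w generalizing w' α α' δ with
  | nil =>
    obtain rfl : w' = [] := List.length_eq_zero_iff.1 hl.symm
    rfl
  | cons a w ih =>
    cases w' with
    | nil => simp at hl
    | cons b w' =>
      have hk : w.length * k + k ≤ δ.length := by
        simpa [Nat.succ_mul] using hδ
      obtain ⟨δ₁, δ₂, rfl, h1⟩ : ∃ δ₁ δ₂, δ = δ₁ ++ δ₂ ∧ δ₁.length = k :=
        ⟨δ.take k, δ.drop k, by simp, by simp; omega⟩
      have hst : T.stepW (α ++ δ₁) a = T.stepW (α' ++ δ₁) b := by
        rw [stepW_append, stepW_append]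
        exact hs δ₁ h1 _ _
      simp only [iterOuts]
      rw [← List.append_assoc, ← List.append_assoc, T.outW_append (α ++ δ₁),
        T.outW_append (α' ++ δ₁), T.stepW_append (α ++ δ₁), T.stepW_append (α' ++ δ₁), hst]
      congr 1
      apply ih
      · simpa using hl
      · rw [outW_length]
        simp at hk
        omega

/-- A finite transducer that synchronizes at no level has a single pair of states separated by
words of every length. -/
theorem exists_persistent_pair [Fintype Q] (T : Transducer X Q)
    (h : ¬ ∃ l, T.Synchronizing l) :
    ∃ p q : Q, ∀ l, ∃ Γ : List X, Γ.length = l ∧ T.stepW Γ p ≠ T.stepW Γ q := by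
  by_contra! hc
  choose f hf using hc
  -- The largest of the merging lengths of all pairs would be a synchronizing level.
  refine h ⟨Finset.univ.sup fun s : Q × Q => f s.1 s.2, fun Γ hΓ p q => ?_⟩
  have hle : f p q ≤ Γ.length := by
    rw [hΓ]
    exact Finset.le_sup (f := fun s : Q × Q => f s.1 s.2) (Finset.mem_univ (p, q))
  rw [← List.take_append_drop (f p q) Γ, stepW_append, stepW_append,
    hf p q (Γ.take (f p q)) (by simp [hle])]

/-- If the inverse separates `p` and `q` by words of every length, then words of equal length
ending in `p` and in `q` act differently. -/
theorem iterW_append_ne (T : Transducer X Q) {k : ℕ} (hs : T.Synchronizing k)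
    (hX : Nonempty X) (hT : T.Invertible) {p q : Q}
    (hpq : ∀ l, ∃ Γ : List X, Γ.length = l ∧ (T.invT hX).stepW Γ p ≠ (T.invT hX).stepW Γ q)
    (u u' : List Q) (hl : u.length = u'.length) :
    T.iterW (u ++ [p]) ≠ T.iterW (u' ++ [q]) := by
  intro h
  obtain ⟨Γ, hΓ, hne⟩ := hpq ((u ++ [p]).length * k)
  obtain ⟨Δ, hΔ⟩ := T.iterW_surjective hT (u ++ [p]) Γ
  have hΔ' := hΔ
  rw [h] at hΔ'
  have hlen : (u ++ [p]).length * k ≤ Δ.length := by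
    rw [← hΓ, ← hΔ, iterW_length]
  have ho := T.iterOuts_eq hs (u ++ [p]) (u' ++ [q]) (by simp [hl]) [] [] Δ hlen
  simp only [List.nil_append, iterOuts_append, iterOuts] at ho
  have hlast := (List.append_inj' ho rfl).2
  simp only [List.cons.injEq, and_true] at hlast
  rw [← T.invT_stepW_outW hX hT, ← T.invT_stepW_outW hX hT] at hlast
  rw [iterW_append] at hΔ hΔ'
  simp only [iterW] at hΔ hΔ'
  rw [hΔ, hΔ'] at hlast
  exact hne hlast

theorem eq_of_iterW_eq (T : Transducer X Q) {k : ℕ} (hs : T.Synchronizing k)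
    (hX : Nonempty X) (hT : T.Invertible) {p q : Q}
    (hpq : ∀ l, ∃ Γ : List X, Γ.length = l ∧ (T.invT hX).stepW Γ p ≠ (T.invT hX).stepW Γ q)
    (w w' : List Q) (hl : w.length = w'.length)
    (hw : ∀ a ∈ w, a = p ∨ a = q) (hw' : ∀ a ∈ w', a = p ∨ a = q)
    (h : T.iterW w = T.iterW w') : w = w' := by
  induction w using List.reverseRecOn generalizing w' with
  | nil => exact (List.length_eq_zero_iff.1 hl.symm).symm
  | append_singleton u a ih =>
    rcases List.eq_nil_or_concat' w' with rfl | ⟨u', b, rfl⟩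
    · simp at hl
    · have hl' : u.length = u'.length := by simpa using hl
      have hab : a = b := by
        rcases hw a (by simp) with rfl | rfl <;> rcases hw' b (by simp) with rfl | rfl
        · rfl
        · exact absurd h (T.iterW_append_ne hs hX hT hpq u u' hl')
        · exact absurd h.symm (T.iterW_append_ne hs hX hT hpq u' u hl'.symm)
        · rfl
      subst hab
      rw [ih u' hl' (fun x hx => hw x (by simp [hx])) (fun x hx => hw' x (by simp [hx]))]
      funext Δ
      apply T.outW_injective hT a
      simpa [iterW_append, iterW] using congrFun h Δ

/-- If `w c w' = w' c w` with `w` shorter than `w'`, then `c` is the letter of `w'` at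
position `|w|`. -/
theorem getElem?_of_append_cons_eq {w w' : List Q} {c : Q}
    (h : w ++ c :: w' = w' ++ c :: w) (hl : w.length < w'.length) :
    w'[w.length]? = some c := by
  have h1 := congrArg (fun l : List Q => l[w.length]?) h
  simpa [List.getElem?_append_left hl] using h1.symm

end Transducer

/-- Let `A` be a core synchronous transducer on `X_n`, synchronizing at
level `k`, invertible, with every state a homeomorphism state, whose inverse transducer
is not synchronizing at any level.  Then there exist states `p ≠ q` such that `w ↦ A_w`
is injective on nonempty words over `{p, q}`; in particular the automaton semigroup
generated by `A` contains a free subsemigroup of rank 2. -/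
theorem inverse_not_synchronizing_implies_free_subsemigroup
    (n : ℕ) (hn : 2 ≤ n) {Q : Type*} [Fintype Q]
    (A : Transducer (Fin n) Q) (k : ℕ)
    (hcore : A.IsCore) (hsync : A.Synchronizing k)
    (hinv : A.Invertible) (hhomeo : A.AllHomeo)
    (hnotsync : ¬ ∃ l : ℕ, (A.invT ⟨⟨0, by omega⟩⟩).Synchronizing l) :
    ∃ p q : Q, p ≠ q ∧
      ∀ w w' : List Q, w ≠ [] → w' ≠ [] →
        (∀ a ∈ w, a = p ∨ a = q) → (∀ a ∈ w', a = p ∨ a = q) →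
        A.wordMap w = A.wordMap w' → w = w' := by
  have hX : Nonempty (Fin n) := ⟨⟨0, by omega⟩⟩
  obtain ⟨p, q, hpq⟩ := Transducer.exists_persistent_pair _ hnotsync
  have hne : p ≠ q := by
    rintro rfl
    obtain ⟨Γ, -, h⟩ := hpq 0
    exact h rfl
  refine ⟨p, q, hne, fun w w' _ _ hw hw' h => ?_⟩
  have hi := A.iterW_eq_of_wordMap_eq h
  have hcomm : ∀ c, c = p ∨ c = q → w ++ c :: w' = w' ++ c :: w := by
    intro c hc
    refine A.eq_of_iterW_eq hsync hX hinv hpq _ _ (by simp; omega) ?_ ?_ ?_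
    · simp only [List.mem_append, List.mem_cons]
      rintro a (ha | rfl | ha)
      exacts [hw a ha, hc, hw' a ha]
    · simp only [List.mem_append, List.mem_cons]
      rintro a (ha | rfl | ha)
      exacts [hw' a ha, hc, hw a ha]
    · funext Δ
      simp only [Transducer.iterW_append, Transducer.iterW, hi]
  have hp := hcomm p (Or.inl rfl)
  have hq := hcomm q (Or.inr rfl)
  refine A.eq_of_iterW_eq hsync hX hinv hpq w w' ?_ hw hw' hi
  rcases lt_trichotomy w.length w'.length with hlt | heq | hgt
  · have h1 := Transducer.getElem?_of_append_cons_eq hp hlt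
    rw [Transducer.getElem?_of_append_cons_eq hq hlt] at h1
    exact absurd (Option.some.inj h1).symm hne
  · exact heq
  · have h1 := Transducer.getElem?_of_append_cons_eq hp.symm hgt
    rw [Transducer.getElem?_of_append_cons_eq hq.symm hgt] at h1
    exact absurd (Option.some.inj h1).symm hne
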